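/- The cubic coefficient of the denominator of the genus-2 Rankin series: the coefficient s₃ of X³ in D(X) equals p²·((2p⁴ + 4p² − 1)·CC' + (2p² − 1)·(BC' + CB') − BB' − p·(A²C' + CA'²))·AA'. -/

import Mathlib

noncomputable section

open PowerSeries

abbrev K : Type := FractionRing (MvPolynomial (Fin 7) ℚ)

def p : K := algebraMap (MvPolynomial (Fin 7) ℚ) K (MvPolynomial.X 0)
def x₀ : K := algebraMap (MvPolynomial (Fin 7) ℚ) K (MvPolynomial.X 1)
def x₁ : K := algebraMap (MvPolynomial (Fin 7) ℚ) K (MvPolynomial.X 2)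
def x₂ : K := algebraMap (MvPolynomial (Fin 7) ℚ) K (MvPolynomial.X 3)
def y₀ : K := algebraMap (MvPolynomial (Fin 7) ℚ) K (MvPolynomial.X 4)
def y₁ : K := algebraMap (MvPolynomial (Fin 7) ℚ) K (MvPolynomial.X 5)
def y₂ : K := algebraMap (MvPolynomial (Fin 7) ℚ) K (MvPolynomial.X 6)

/-- The four "exponential frequencies" 1, x₁, x₂, x₁x₂ (resp. 1, y₁, y₂, y₁y₂). -/
def uu : Fin 4 → K := ![1, x₁, x₂, x₁*x₂]
def vv : Fin 4 → K := ![1, y₁, y₂, y₁*y₂]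

/-- The denominator D(X) = Π_{u,v} (1 − x₀y₀uvX), product of sixteen linear factors. -/
def D : Polynomial K :=
  ∏ i : Fin 4, ∏ j : Fin 4, (1 - Polynomial.C (x₀*y₀*uu i*vv j) * Polynomial.X)

/-- Spherical images of the genus-2 Hecke operators T(p), T₁(p²), [p]₂ in the x-variables. -/
def A : K := x₀*(1+x₁)*(1+x₂)
def B : K := x₀^2*((x₁^2*x₂ + x₁*x₂^2)*p^2 + x₁*x₂*p^2 - x₁*x₂ + (x₁+x₂)*p^2)/p^3
def Cc : K := x₀^2*x₁*x₂/p^3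

/-- The same spherical images in the y-variables. -/
def A' : K := y₀*(1+y₁)*(1+y₂)
def B' : K := y₀^2*((y₁^2*y₂ + y₁*y₂^2)*p^2 + y₁*y₂*p^2 - y₁*y₂ + (y₁+y₂)*p^2)/p^3
def Cc' : K := y₀^2*y₁*y₂/p^3

/-- The first four coefficients of a polynomial with constant term one. -/
def HasCoeffs {F : Type*} [Field F] (P : Polynomial F) (a b c : F) : Prop :=
  P.coeff 0 = 1 ∧ P.coeff 1 = a ∧ P.coeff 2 = b ∧ P.coeff 3 = c

theorem HasCoeffs.mul {F : Type*} [Field F] {P Q : Polynomial F} {a b c a' b' c' : F}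
    (h : HasCoeffs P a b c) (h' : HasCoeffs Q a' b' c') :
    HasCoeffs (P * Q) (a + a') (b + a * a' + b') (c + b * a' + a * b' + c') := by
  obtain ⟨h0, h1, h2, h3⟩ := h
  obtain ⟨k0, k1, k2, k3⟩ := h'
  refine ⟨?_, ?_, ?_, ?_⟩ <;>
    simp [Polynomial.coeff_mul, Finset.Nat.antidiagonal_succ, h0, h1, h2, h3, k0, k1, k2, k3] <;>
    ring

theorem hasCoeffs_linear {F : Type*} [Field F] (t : F) :
    HasCoeffs (1 - Polynomial.C t * Polynomial.X) (-t) 0 0 := by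
  refine ⟨?_, ?_, ?_, ?_⟩ <;> simp [Polynomial.coeff_one, Polynomial.coeff_X]

/-- The product over one row, in terms of the elementary symmetric functions. -/
theorem hasCoeffs_row {F : Type*} [Field F] (a : F) (v : Fin 4 → F) (e₁ e₂ e₃ : F)
    (h₁ : e₁ = v 0 + v 1 + v 2 + v 3)
    (h₂ : e₂ = v 0 * v 1 + v 0 * v 2 + v 0 * v 3 + v 1 * v 2 + v 1 * v 3 + v 2 * v 3)
    (h₃ : e₃ = v 0 * v 1 * v 2 + v 0 * v 1 * v 3 + v 0 * v 2 * v 3 + v 1 * v 2 * v 3) :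
    HasCoeffs (∏ j : Fin 4, (1 - Polynomial.C (a * v j) * Polynomial.X))
      (-(a * e₁)) (a ^ 2 * e₂) (-(a ^ 3 * e₃)) := by
  rw [Fin.prod_univ_four]
  have h := (((hasCoeffs_linear (a * v 0)).mul (hasCoeffs_linear (a * v 1))).mul
    (hasCoeffs_linear (a * v 2))).mul (hasCoeffs_linear (a * v 3))
  subst h₁ h₂ h₃
  convert h using 1 <;> ring

theorem coeff_three_prod {F : Type*} [Field F] (z : F) (u v : Fin 4 → F) (e₁ e₂ e₃ f₁ f₂ f₃ : F)
    (h₁ : e₁ = v 0 + v 1 + v 2 + v 3)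
    (h₂ : e₂ = v 0 * v 1 + v 0 * v 2 + v 0 * v 3 + v 1 * v 2 + v 1 * v 3 + v 2 * v 3)
    (h₃ : e₃ = v 0 * v 1 * v 2 + v 0 * v 1 * v 3 + v 0 * v 2 * v 3 + v 1 * v 2 * v 3)
    (k₁ : f₁ = u 0 + u 1 + u 2 + u 3)
    (k₂ : f₂ = u 0 * u 1 + u 0 * u 2 + u 0 * u 3 + u 1 * u 2 + u 1 * u 3 + u 2 * u 3)
    (k₃ : f₃ = u 0 * u 1 * u 2 + u 0 * u 1 * u 3 + u 0 * u 2 * u 3 + u 1 * u 2 * u 3) :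
    (∏ i : Fin 4, ∏ j : Fin 4,
      (1 - Polynomial.C (z * u i * v j) * Polynomial.X)).coeff 3 =
      -z ^ 3 * ((f₁ ^ 3 - 3 * f₁ * f₂ + 3 * f₃) * e₃ + (f₁ * f₂ - 3 * f₃) * e₁ * e₂
        + f₃ * e₁ ^ 3) := by
  have r := fun i => hasCoeffs_row (z * u i) v e₁ e₂ e₃ h₁ h₂ h₃
  rw [Fin.prod_univ_four]
  have h := (((r 0).mul (r 1)).mul (r 2)).mul (r 3)
  rw [h.2.2.2]
  subst k₁ k₂ k₃
  ring

theorem generic_identity {F : Type*} [Field F] (p x₀ x₁ x₂ y₀ y₁ y₂ : F) (hp : p ≠ 0)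
    (A B C A' B' C' : F)
    (hA : A = x₀*(1+x₁)*(1+x₂))
    (hB : B = x₀^2*((x₁^2*x₂ + x₁*x₂^2)*p^2 + x₁*x₂*p^2 - x₁*x₂ + (x₁+x₂)*p^2)/p^3)
    (hC : C = x₀^2*x₁*x₂/p^3)
    (hA' : A' = y₀*(1+y₁)*(1+y₂))
    (hB' : B' = y₀^2*((y₁^2*y₂ + y₁*y₂^2)*p^2 + y₁*y₂*p^2 - y₁*y₂ + (y₁+y₂)*p^2)/p^3)
    (hC' : C' = y₀^2*y₁*y₂/p^3) :
    (∏ i : Fin 4, ∏ j : Fin 4,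
      (1 - Polynomial.C (x₀ * y₀ * (![1, x₁, x₂, x₁*x₂] : Fin 4 → F) i *
        (![1, y₁, y₂, y₁*y₂] : Fin 4 → F) j) * Polynomial.X)).coeff 3 =
    p^2*((2*p^4 + 4*p^2 - 1)*(C*C') + (2*p^2 - 1)*(B*C' + C*B')
      - B*B' - p*(A^2*C' + C*A'^2))*(A*A') := by
  rw [coeff_three_prod (x₀ * y₀) _ _ _ _ _ _ _ _ rfl rfl rfl rfl rfl rfl]
  subst hA hB hC hA' hB' hC'
  simp only [Matrix.cons_val]
  field_simp
  ring

theorem p_ne_zero : p ≠ 0 := by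
  unfold p
  rw [Ne, FaithfulSMul.algebraMap_eq_zero_iff]
  exact MvPolynomial.X_ne_zero 0

theorem stmt_14 :
    D.coeff 3 = p^2*((2*p^4 + 4*p^2 - 1)*(Cc*Cc') + (2*p^2 - 1)*(B*Cc' + Cc*B')
      - B*B' - p*(A^2*Cc' + Cc*A'^2))*(A*A') := by
  exact generic_identity p x₀ x₁ x₂ y₀ y₁ y₂ p_ne_zero A B Cc A' B' Cc' rfl rfl rfl rfl rfl rfl

end
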